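/- arXiv:2305.02953 — 3 statements merged into one kernel-verified Lean document; each statement's English description precedes it below -/
import Mathlib

section
/- A group H is strongly bounded if and only if for every sequence {Y_n}_{n ∈ ℕ} of subsets of H such that 𝒢(Y_n) ⊆ Y_{n+1} for all n and ⋃_{n ∈ ℕ} Y_n = H, there exists N ∈ ℕ with Y_N = H. -/
/-- `wordSet Y n` is the set `Y^{[n]}` of all products of length at most `n`
of elements of `Y` and their inverses. -/
def wordSet {H : Type*} [Group H] (Y : Set H) (n : ℕ) : Set H :=
  {h | ∃ m : ℕ, m ≤ n ∧ ∃ g : Fin m → H,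
    (∀ i, g i ∈ Y ∨ (g i)⁻¹ ∈ Y) ∧ h = (List.ofFn g).prod}

/-- A subgroup `K` of `G` is malnormal if `K ∩ gKg⁻¹ = {1}` for all `g ∉ K`. -/
def Malnormal {G : Type*} [Group G] (K : Subgroup G) : Prop :=
  ∀ g : G, g ∉ K → ∀ y : G, y ∈ K → g⁻¹ * y * g ∈ K → y = 1

/-- A group is strongly bounded if every action by isometries on a metric
space has bounded orbits. -/
def StronglyBounded (H : Type*) [Group H] : Prop :=
  ∀ (X : Type) (_ : MetricSpace X) (_ : MulAction H X),
    (∀ h : H, Isometry (fun x : X => h • x)) →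
    ∀ x : X, Bornology.IsBounded (MulAction.orbit H x)

/-- A group is Jónsson if every proper subgroup has strictly smaller cardinality. -/
def Jonsson (H : Type*) [Group H] : Prop :=
  ∀ K : Subgroup H, K ≠ ⊤ → Cardinal.mk K < Cardinal.mk H

/-!
Both properties say that every seminorm on `H` is bounded.

* An orbit `H • x` is bounded iff the displacement seminorm `h ↦ dist (h • x) x` is, and a seminorm
  becomes, after adding the discrete norm, the displacement of `1` for a left-invariant metric on
  `H`.
* Call `Y` an exhausting chain if `𝒢(Y n) ⊆ Y (n + 1)` for all `n` and `⋃ n, Y n = H`. The balls of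
  radius `2 ^ n` of a seminorm form an exhausting chain. Conversely, along an exhausting chain the
  first index at which `h` or `h⁻¹` appears is subadditive up to the additive constant `1`, so
  adding the discrete norm to it (with `1` entering at index `0`) gives a seminorm.
-/

open scoped Pointwise

section WordSet

variable {H : Type*} [Group H] {Y Z : Set H} {g h : H} {m n : ℕ}

theorem wordSet_eq_pow (Y : Set H) (n : ℕ) : wordSet Y n = (insert 1 (Y ∪ Y⁻¹)) ^ n := by
  have one_mem : (1 : H) ∈ insert 1 (Y ∪ Y⁻¹) := Set.mem_insert _ _
  apply Set.Subset.antisymm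
  · rintro _ ⟨m, hmn, g, hg, rfl⟩
    exact Set.pow_subset_pow_right one_mem hmn
      (Set.mem_pow.2 ⟨fun i => ⟨g i, Or.inr (hg i)⟩, rfl⟩)
  · induction n with
    | zero => exact fun h hh => ⟨0, le_rfl, Fin.elim0, fun i => i.elim0, by simpa using hh⟩
    | succ n ih =>
      rw [pow_succ']
      rintro _ ⟨a, ha, b, hb, rfl⟩
      obtain ⟨m, hmn, g, hg, rfl⟩ := ih hb
      rcases ha with rfl | ha
      · exact ⟨m, hmn.trans n.le_succ, g, hg, one_mul _⟩
      · exact ⟨m + 1, Nat.succ_le_succ hmn, Fin.cons a g, Fin.cases ha hg, by simp⟩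

theorem mem_wordSet_one : h ∈ wordSet Y 1 ↔ h = 1 ∨ h ∈ Y ∨ h⁻¹ ∈ Y := by
  simp [wordSet_eq_pow]

theorem one_mem_wordSet (Y : Set H) (n : ℕ) : 1 ∈ wordSet Y n := by
  rw [wordSet_eq_pow]
  exact Set.one_mem_pow (Set.mem_insert _ _)

theorem subset_wordSet_one (Y : Set H) : Y ⊆ wordSet Y 1 :=
  fun _ h => mem_wordSet_one.2 (Or.inr (Or.inl h))

theorem wordSet_subset_wordSet (hYZ : Y ⊆ Z) (hmn : m ≤ n) : wordSet Y m ⊆ wordSet Z n := by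
  have letters_subset : insert 1 (Y ∪ Y⁻¹) ⊆ insert 1 (Z ∪ Z⁻¹) :=
    Set.insert_subset_insert (Set.union_subset_union hYZ (Set.inv_subset_inv.2 hYZ))
  simp only [wordSet_eq_pow]
  exact Set.pow_subset_pow letters_subset (Set.mem_insert _ _) hmn

theorem inv_mem_wordSet_iff : h⁻¹ ∈ wordSet Y n ↔ h ∈ wordSet Y n := by
  rw [← Set.mem_inv, wordSet_eq_pow, ← inv_pow, Set.inv_insert, Set.union_inv, inv_one, inv_inv,
    Set.union_comm]

theorem mul_mem_wordSet (hg : g ∈ wordSet Y m) (hh : h ∈ wordSet Y n) :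
    g * h ∈ wordSet Y (m + n) := by
  rw [wordSet_eq_pow] at hg hh ⊢
  exact pow_add (insert 1 (Y ∪ Y⁻¹)) m n ▸ Set.mul_mem_mul hg hh

theorem wordSet_setOf_le_subset (p : GroupSeminorm H) {r : ℝ} (hr : 0 ≤ r) (n : ℕ) :
    wordSet {h | p h ≤ r} n ⊆ {h | p h ≤ n * r} := by
  have letter_le : ∀ a ∈ insert 1 ({h | p h ≤ r} ∪ {h | p h ≤ r}⁻¹), p a ≤ r := by
    rintro a (rfl | ha | ha)
    · simpa using hr
    · exact ha
    · simpa using ha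
  rw [wordSet_eq_pow]
  induction n with
  | zero => simp
  | succ n ih =>
    rw [pow_succ]
    rintro _ ⟨a, ha, b, hb, rfl⟩
    calc p (a * b) ≤ p a + p b := map_mul_le_add p a b
      _ ≤ n * r + r := add_le_add (ih ha) (letter_le b hb)
      _ = (n + 1 : ℕ) * r := by push_cast; ring

end WordSet

section Chain

variable {H : Type*} [Group H] {Y : ℕ → Set H}

theorem monotone_of_wordSet_subset_succ (hY : ∀ n, wordSet (Y n) 2 ⊆ Y (n + 1)) : Monotone Y :=
  monotone_nat_of_le_succ fun n =>
    ((subset_wordSet_one _).trans (wordSet_subset_wordSet subset_rfl one_le_two)).trans (hY n)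

/-- The index at which `h` enters a chain `Y` of subsets, up to inversion: the least `n` such that
`h = 1`, `h ∈ Y n` or `h⁻¹ ∈ Y n`. It is `0` if there is no such `n`. -/
noncomputable def chainIndex (Y : ℕ → Set H) (h : H) : ℕ :=
  sInf {n | h ∈ wordSet (Y n) 1}

theorem chainIndex_one (Y : ℕ → Set H) : chainIndex Y 1 = 0 :=
  Nat.sInf_eq_zero.2 (Or.inl (one_mem_wordSet _ _))

theorem chainIndex_inv (Y : ℕ → Set H) (h : H) : chainIndex Y h⁻¹ = chainIndex Y h := by
  simp only [chainIndex, inv_mem_wordSet_iff]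

theorem mem_wordSet_chainIndex (hU : ⋃ n, Y n = Set.univ) (h : H) :
    h ∈ wordSet (Y (chainIndex Y h)) 1 := by
  obtain ⟨n, hn⟩ := Set.iUnion_eq_univ_iff.1 hU h
  exact Nat.sInf_mem (s := {n | h ∈ wordSet (Y n) 1}) ⟨n, subset_wordSet_one _ hn⟩

theorem mem_wordSet_of_chainIndex_le (hY : Monotone Y) (hU : ⋃ n, Y n = Set.univ) {h : H} {n : ℕ}
    (hn : chainIndex Y h ≤ n) : h ∈ wordSet (Y n) 1 :=
  wordSet_subset_wordSet (hY hn) le_rfl (mem_wordSet_chainIndex hU h)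

theorem chainIndex_mul_le (hY : ∀ n, wordSet (Y n) 2 ⊆ Y (n + 1)) (hU : ⋃ n, Y n = Set.univ)
    (g h : H) : chainIndex Y (g * h) ≤ max (chainIndex Y g) (chainIndex Y h) + 1 := by
  have hmono := monotone_of_wordSet_subset_succ hY
  have hg := mem_wordSet_of_chainIndex_le hmono hU (le_max_left (chainIndex Y g) (chainIndex Y h))
  have hh := mem_wordSet_of_chainIndex_le hmono hU (le_max_right (chainIndex Y g) (chainIndex Y h))
  exact Nat.sInf_le (subset_wordSet_one _ (hY _ (mul_mem_wordSet hg hh)))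

open Classical in
/-- The seminorm of an exhausting chain: the sum of `chainIndex` and the discrete norm, which
absorbs the error term in `chainIndex_mul_le`. -/
noncomputable def chainSeminorm (hY : ∀ n, wordSet (Y n) 2 ⊆ Y (n + 1))
    (hU : ⋃ n, Y n = Set.univ) : GroupSeminorm H where
  toFun h := chainIndex Y h + (1 : GroupSeminorm H) h
  map_one' := by simp [chainIndex_one]
  inv' h := by rw [chainIndex_inv, map_inv_eq_map]
  mul_le' g h := by
    rcases eq_or_ne g 1 with rfl | hg
    · simp [chainIndex_one]
    rcases eq_or_ne h 1 with rfl | hh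
    · simp [chainIndex_one]
    have index_le : (chainIndex Y (g * h) : ℝ) ≤ chainIndex Y g + chainIndex Y h + 1 := by
      have := chainIndex_mul_le hY hU g h
      norm_cast
      omega
    have discrete_le : (1 : GroupSeminorm H) (g * h) ≤ 1 := by
      rw [GroupSeminorm.apply_one]
      split_ifs <;> norm_num
    simp only [GroupSeminorm.apply_one g, GroupSeminorm.apply_one h, if_neg hg, if_neg hh]
    linarith

theorem chainIndex_le_chainSeminorm (hY : ∀ n, wordSet (Y n) 2 ⊆ Y (n + 1))
    (hU : ⋃ n, Y n = Set.univ) (h : H) : chainIndex Y h ≤ chainSeminorm hY hU h :=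
  le_add_of_nonneg_right (apply_nonneg _ h)

theorem exists_eq_univ_of_bddAbove_chainSeminorm (hY : ∀ n, wordSet (Y n) 2 ⊆ Y (n + 1))
    (hU : ⋃ n, Y n = Set.univ) (hb : BddAbove (Set.range (chainSeminorm hY hU))) :
    ∃ N, Y N = Set.univ := by
  obtain ⟨C, hC⟩ := hb
  obtain ⟨N, hN⟩ := exists_nat_ge C
  refine ⟨N + 1, Set.eq_univ_of_forall fun h => hY N ?_⟩
  have index_le : (chainIndex Y h : ℝ) ≤ N :=
    (chainIndex_le_chainSeminorm hY hU h).trans ((hC (Set.mem_range_self h)).trans hN)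
  exact wordSet_subset_wordSet subset_rfl one_le_two
    (mem_wordSet_of_chainIndex_le (monotone_of_wordSet_subset_succ hY) hU (Nat.cast_le.1 index_le))

theorem bddAbove_range_of_forall_chain
    (hH : ∀ Y : ℕ → Set H, (∀ n, wordSet (Y n) 2 ⊆ Y (n + 1)) →
      ⋃ n, Y n = Set.univ → ∃ N, Y N = Set.univ) (p : GroupSeminorm H) :
    BddAbove (Set.range p) := by
  let ball (n : ℕ) : Set H := {h | p h ≤ 2 ^ n}
  have wordSet_ball_subset (n : ℕ) : wordSet (ball n) 2 ⊆ ball (n + 1) := by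
    simpa [ball, pow_succ'] using wordSet_setOf_le_subset p (pow_nonneg zero_le_two n) 2
  have iUnion_ball : ⋃ n, ball n = Set.univ := Set.iUnion_eq_univ_iff.2 fun h =>
    (pow_unbounded_of_one_lt (p h) one_lt_two).imp fun _ => le_of_lt
  obtain ⟨N, hN⟩ := hH ball wordSet_ball_subset iUnion_ball
  exact ⟨2 ^ N, Set.forall_mem_range.2 (Set.eq_univ_iff_forall.1 hN)⟩

theorem forall_bddAbove_range_iff_forall_chain :
    (∀ p : GroupSeminorm H, BddAbove (Set.range p)) ↔
      ∀ Y : ℕ → Set H, (∀ n, wordSet (Y n) 2 ⊆ Y (n + 1)) →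
        ⋃ n, Y n = Set.univ → ∃ N, Y N = Set.univ :=
  ⟨fun hH _ hY hU => exists_eq_univ_of_bddAbove_chainSeminorm hY hU (hH _),
    bddAbove_range_of_forall_chain⟩

end Chain

section Displacement

variable {X : Type*} [PseudoMetricSpace X]

/-- The displacement of a point `x` under an isometric action, as a seminorm on the acting
group. -/
def displacementSeminorm (H : Type*) [Group H] [MulAction H X] [IsIsometricSMul H X] (x : X) :
    GroupSeminorm H where
  toFun h := dist (h • x) x
  map_one' := by simp
  mul_le' g h := by
    calc dist ((g * h) • x) x ≤ dist ((g * h) • x) (g • x) + dist (g • x) x := dist_triangle _ _ _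
      _ = dist (g • x) x + dist (h • x) x := by rw [mul_smul, dist_smul, add_comm]
  inv' h := by rw [← dist_smul h, smul_inv_smul, dist_comm]

theorem isBounded_orbit_of_bddAbove_displacementSeminorm {H : Type*} [Group H] [MulAction H X]
    [IsIsometricSMul H X] {x : X} (hb : BddAbove (Set.range (displacementSeminorm H x))) :
    Bornology.IsBounded (MulAction.orbit H x) := by
  obtain ⟨C, hC⟩ := hb
  exact (Metric.isBounded_iff_subset_closedBall x).2
    ⟨C, Set.range_subset_iff.2 fun h => hC (Set.mem_range_self h)⟩

end Displacement

theorem stronglyBounded_of_forall_bddAbove_range {H : Type*} [Group H]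
    (hH : ∀ p : GroupSeminorm H, BddAbove (Set.range p)) : StronglyBounded H := by
  intro X _ _ hiso x
  have : IsIsometricSMul H X := ⟨hiso⟩
  exact isBounded_orbit_of_bddAbove_displacementSeminorm (hH _)

namespace StronglyBounded

variable {H : Type} [Group H]

theorem bddAbove_range_groupNorm (hH : StronglyBounded H) (p : GroupNorm H) :
    BddAbove (Set.range p) := by
  let _ : NormedGroup H := p.toNormedGroup
  have hb : Bornology.IsBounded (MulAction.orbit H (1 : H)) :=
    hH H inferInstance inferInstance (isometry_smul H) 1
  obtain ⟨C, hC⟩ := isBounded_iff_forall_norm_le'.1 hb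
  exact ⟨C, Set.forall_mem_range.2 fun h => hC h ⟨h, mul_one h⟩⟩

open Classical in
theorem bddAbove_range_groupSeminorm (hH : StronglyBounded H) (p : GroupSeminorm H) :
    BddAbove (Set.range p) := by
  let discrete : GroupNorm H := 1
  have discrete_nonneg (h : H) : 0 ≤ discrete h := apply_nonneg discrete h
  let q : GroupNorm H :=
    { p + discrete.toGroupSeminorm with
      eq_one_of_map_eq_zero' := fun h (hq : p h + discrete h = 0) =>
        eq_one_of_map_eq_zero discrete (by linarith [apply_nonneg p h, discrete_nonneg h]) }
  have p_le_q (h : H) : p h ≤ q h := le_add_of_nonneg_right (discrete_nonneg h)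
  exact BddAbove.range_mono q p_le_q (hH.bddAbove_range_groupNorm q)

end StronglyBounded

theorem stronglyBounded_iff_forall_bddAbove_range {H : Type} [Group H] :
    StronglyBounded H ↔ ∀ p : GroupSeminorm H, BddAbove (Set.range p) :=
  ⟨StronglyBounded.bddAbove_range_groupSeminorm, stronglyBounded_of_forall_bddAbove_range⟩

theorem stronglyBounded_iff_chain {H : Type} [Group H] :
    StronglyBounded H ↔
      ∀ Y : ℕ → Set H, (∀ n : ℕ, wordSet (Y n) 2 ⊆ Y (n + 1)) →
        (⋃ n : ℕ, Y n) = Set.univ → ∃ N : ℕ, Y N = Set.univ :=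
  stronglyBounded_iff_forall_bddAbove_range.trans forall_bddAbove_range_iff_forall_chain
end

section
/- If E is a set of cardinality ℵ₁, then there exists a function J : E × E → E such that for every uncountable subset Z ⊆ E the image J(Z × Z) equals E. -/
/-!
Well-order `E` in type `ω₁` and embed it into `ℝ`. For `a < b`, the distance between the images of
`a` and `b` selects finitely many of the countably many points of `[a, b]`, and the square bracket
`[ab]` is the least of them. On the pairs from an uncountable set `Z` it takes every value in some
club set. By Ulam's matrix there is a map `h : E → E` all of whose fibres are stationary, and hence
meet this club set, so that `J(a, b) = h([ab])` takes every value on `Z`.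
-/

open Set Cardinal Order Topology

section LimitPoints

variable {α : Type*} [LinearOrder α] {B B' : Set α} {δ : α}

/-- The set of limit points of `B`: those `δ` which are the supremum of a nonempty part of `B` lying
strictly below `δ`. Nonemptiness only excludes a least element of the order. -/
def limitPoints (B : Set α) : Set α :=
  {δ | (B ∩ Iio δ).Nonempty ∧ IsLUB (B ∩ Iio δ) δ}

theorem limitPoints_mono (h : B ⊆ B') : limitPoints B ⊆ limitPoints B' := by
  rintro δ ⟨hne, hlub⟩
  have hsub : B ∩ Iio δ ⊆ B' ∩ Iio δ := inter_subset_inter_left _ h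
  exact ⟨hne.mono hsub, fun _ hx => hx.2.le, fun _ hu => hlub.2 (upperBounds_mono_set hsub hu)⟩

theorem exists_mem_forall_lt_of_mem_limitPoints (hδ : δ ∈ limitPoints B) {s : Set α}
    (hs : s.Finite) (hsδ : s ⊆ Iio δ) : ∃ b ∈ B, b < δ ∧ ∀ ξ ∈ s, ξ < b := by
  obtain ⟨⟨b₀, hb₀⟩, hlub⟩ := hδ
  obtain ⟨γ, hγ, hmax⟩ := exists_max_image _ id (hs.insert b₀) (insert_nonempty _ _)
  have hγδ : γ < δ := insert_subset hb₀.2 hsδ hγ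
  obtain ⟨b, hb, hγb, -⟩ := hlub.exists_between hγδ
  exact ⟨b, hb.1, hb.2, fun ξ hξ => (hmax ξ (mem_insert_of_mem _ hξ)).trans_lt hγb⟩

theorem dirSupClosed_limitPoints : DirSupClosed (limitPoints B) := by
  intro d hd ⟨x, hx⟩ _ a ha
  have hsub : ∀ y ∈ d, B ∩ Iio y ⊆ B ∩ Iio a := fun y hy =>
    inter_subset_inter_right _ (Iio_subset_Iio (ha.1 hy))
  exact ⟨(hd hx).1.mono (hsub x hx), fun _ hb => hb.2.le, fun u hu =>
    ha.2 fun y hy => (hd hy).2.2 (upperBounds_mono_set (hsub y hy) hu)⟩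

theorem isCofinal_limitPoints [WellFoundedLT α] (hα : ℵ₀ < cof α) (hB : IsCofinal B) :
    IsCofinal (limitPoints B) := by
  intro a
  have : Nonempty α := ⟨a⟩
  have : NoMaxOrder α :=
    (noTopOrder_iff_noMaxOrder α).1 (one_lt_cof_iff.1 (one_lt_aleph0.trans hα))
  let := WellFoundedLT.toOrderBot α
  let := WellFoundedLT.conditionallyCompleteLinearOrderBot α
  have hgt : ∀ x, ∃ b ∈ B, x < b := fun x =>
    let ⟨y, hxy⟩ := exists_gt x
    let ⟨b, hb, hyb⟩ := hB y
    ⟨b, hb, hxy.trans_le hyb⟩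
  choose f hfB hf using hgt
  let x : ℕ → α := fun n => f^[n] a
  have hx : ∀ n, x (n + 1) = f (x n) := fun n => Function.iterate_succ_apply' f n a
  have hmono : StrictMono x := strictMono_nat_of_lt_succ fun n => hx n ▸ hf (x n)
  have hbdd : BddAbove (range x) := .of_not_isCofinal fun h =>
    ((cof_le h).trans (countable_range x).le_aleph0).not_gt hα
  have hlub : IsLUB (range x) (⨆ n, x n) := isLUB_ciSup hbdd
  have hmem : ∀ n, x (n + 1) ∈ B ∩ Iio (⨆ n, x n) := fun n =>
    ⟨hx n ▸ hfB (x n), (hmono n.succ.lt_succ_self).trans_le (le_ciSup hbdd _)⟩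
  refine ⟨⨆ n, x n, ⟨⟨x 1, hmem 0⟩, fun _ hb => hb.2.le, fun u hu => hlub.2 ?_⟩, le_ciSup hbdd 0⟩
  rintro _ ⟨n, rfl⟩
  exact (hmono n.lt_succ_self).le.trans (hu (hmem n))

theorem isClub_limitPoints [WellFoundedLT α] (hα : ℵ₀ < cof α) (hB : IsCofinal B) :
    IsClub (limitPoints B) :=
  ⟨dirSupClosed_limitPoints, isCofinal_limitPoints hα hB⟩

end LimitPoints

section CountableInitialSegments

variable {α : Type*} [LinearOrder α]

theorem isCofinal_of_not_countable (hI : ∀ a : α, (Iic a).Countable) {B : Set α}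
    (hB : ¬B.Countable) : IsCofinal B := by
  by_contra h
  obtain ⟨a, ha⟩ := not_isCofinal_iff.1 h
  exact hB ((hI a).mono fun b hb => (ha b hb).le)

theorem aleph0_lt_cof_of_countable_Iic [Uncountable α] (hI : ∀ a : α, (Iic a).Countable) :
    ℵ₀ < cof α := by
  obtain ⟨s, hs, hcard⟩ := exists_cof_eq α
  by_contra! h
  have hsc : s.Countable := le_aleph0_iff_set_countable.1 (hcard ▸ h)
  refine not_countable_univ (α := α) ((hsc.biUnion fun x _ => hI x).mono fun a _ => ?_)
  obtain ⟨x, hx, hax⟩ := hs a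
  exact mem_biUnion hx hax

theorem exists_nat_injOn_Iic (hI : ∀ a : α, (Iic a).Countable) :
    ∃ e : α → α → ℕ, ∀ b, InjOn (e b) (Iic b) := by
  choose e he using fun b => countable_iff_exists_injOn.1 (hI b)
  exact ⟨e, he⟩

theorem exists_not_countable_setOf_isStationary [WellFoundedLT α] [Uncountable α]
    (hI : ∀ a : α, (Iic a).Countable) (e : α → α → ℕ) :
    ∃ m, ¬{ξ | IsStationary {b | ξ < b ∧ e b ξ = m}}.Countable := by
  have hα := aleph0_lt_cof_of_countable_Iic hI
  have hcolumn : ∀ ξ, ∃ m, IsStationary {b | ξ < b ∧ e b ξ = m} := by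
    intro ξ
    have hIoi : IsStationary (Ioi ξ) := .of_not_isCofinal_compl fun h => by
      rw [compl_Ioi] at h
      exact ((cof_le h).trans (hI ξ).le_aleph0).not_gt hα
    rw [← isStationary_iUnion_iff_of_countable hα.ne']
    exact hIoi.mono fun b hb => mem_iUnion.2 ⟨e b ξ, hb, rfl⟩
  by_contra! h
  exact not_countable_univ (α := α) ((countable_iUnion h).mono fun ξ _ => mem_iUnion.2 (hcolumn ξ))

-- Ulam's matrix: a row `m` with uncountably many stationary entries has pairwise disjoint entries,
-- because `ξ` is recovered from `b` and `m` by inverting `e b`.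
theorem exists_forall_isStationary_preimage_singleton [WellFoundedLT α] [Uncountable α]
    (hI : ∀ a : α, (Iic a).Countable) {κ : Type*} [Nonempty κ] (hκ : #κ ≤ ℵ₁) :
    ∃ h : α → κ, ∀ c, IsStationary (h ⁻¹' {c}) := by
  obtain ⟨e, he⟩ := exists_nat_injOn_Iic hI
  obtain ⟨m, hm⟩ := exists_not_countable_setOf_isStationary hI e
  set T := {ξ | IsStationary {b | ξ < b ∧ e b ξ = m}}
  obtain ⟨g⟩ : Nonempty (κ ↪ T) := by
    have hT : ℵ₁ ≤ #T := by
      rwa [aleph_one_le_iff, ← not_le, le_aleph0_iff_set_countable]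
    refine lift_mk_le'.1 ((lift_le.2 hκ).trans ?_)
    simpa using hT
  have hg : Function.Injective fun c => (g c : α) := Subtype.val_injective.comp g.injective
  refine ⟨fun b => Function.invFun (fun c => (g c : α)) (Function.invFunOn (e b) (Iic b) m),
    fun c => (g c).2.mono ?_⟩
  rintro b ⟨hlt, hbm⟩
  have hinv : Function.invFunOn (e b) (Iic b) m = g c :=
    hbm ▸ (he b).leftInvOn_invFunOn hlt.le
  simp only [mem_preimage, mem_singleton_iff, hinv]
  exact Function.leftInverse_invFun hg c

theorem exists_isClub_forall_isOpen_mem_limitPoints [WellFoundedLT α] [Uncountable α]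
    (hI : ∀ a : α, (Iic a).Countable) {X : Type*} [TopologicalSpace X] [SecondCountableTopology X]
    (r : α → X) (Z : Set α) :
    ∃ C : Set α, IsClub C ∧ ∀ δ ∈ C, ∀ U, IsOpen U → ¬(Z ∩ r ⁻¹' U).Countable →
      δ ∈ limitPoints (Z ∩ r ⁻¹' U) := by
  have hα := aleph0_lt_cof_of_countable_Iic hI
  let 𝓥 := {V ∈ TopologicalSpace.countableBasis X | ¬(Z ∩ r ⁻¹' V).Countable}
  have h𝓥 : 𝓥.Countable := (TopologicalSpace.countable_countableBasis X).mono (sep_subset _ _)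
  refine ⟨⋂₀ ((fun V => limitPoints (Z ∩ r ⁻¹' V)) '' 𝓥),
    .sInter_of_countable hα.ne' (h𝓥.image _) ?_, fun δ hδ U hU hZU => ?_⟩
  · rintro _ ⟨V, hV, rfl⟩
    exact isClub_limitPoints hα (isCofinal_of_not_countable hI hV.2)
  obtain ⟨V, hV, hVU⟩ : ∃ V ∈ 𝓥, V ⊆ U := by
    by_contra! h
    obtain ⟨S, hS, rfl⟩ := (TopologicalSpace.isBasis_countableBasis X).open_eq_sUnion hU
    refine hZU ?_
    rw [preimage_sUnion, inter_iUnion₂]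
    refine ((TopologicalSpace.countable_countableBasis X).mono hS).biUnion fun V hV => ?_
    by_contra hZV
    exact h V ⟨hS hV, hZV⟩ (subset_sUnion_of_mem hV)
  have hδV : δ ∈ limitPoints (Z ∩ r ⁻¹' V) := hδ _ (mem_image_of_mem _ hV)
  exact limitPoints_mono (inter_subset_inter_right _ (preimage_mono hVU)) hδV

end CountableInitialSegments

section Condensation

variable {α X : Type*}

theorem countable_setOf_exists_nhds_countable [TopologicalSpace X] [HereditarilyLindelofSpace X]
    (r : α → X) (Z : Set α) :
    {b ∈ Z | ∃ U ∈ 𝓝 (r b), (Z ∩ r ⁻¹' U).Countable}.Countable := by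
  refine (HereditarilyLindelofSpace.isLindelof
    {x | ∃ U ∈ 𝓝 x, (Z ∩ r ⁻¹' U).Countable}).induction_on (p := fun t => (Z ∩ r ⁻¹' t).Countable)
    (fun s t hst ht => ht.mono (inter_subset_inter_right _ (preimage_mono hst))) ?_ ?_
  · intro S hS h
    rw [preimage_sUnion, inter_iUnion₂]
    exact hS.biUnion h
  · rintro x ⟨U, hU, hc⟩
    exact ⟨U, mem_nhdsWithin_of_mem_nhds hU, hc⟩

theorem exists_nat_not_countable_inter_preimage_lt_dist [MetricSpace X] {r : α → X}
    (hr : Function.Injective r) {Z : Set α} {U : Set X} (hU : ¬(Z ∩ r ⁻¹' U).Countable) (b : α) :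
    ∃ N : ℕ, ¬(Z ∩ r ⁻¹' (U ∩ {x | 1 < N * dist x (r b)})).Countable := by
  by_contra! h
  refine hU (((countable_singleton b).union (countable_iUnion h)).mono fun a ha => ?_)
  refine or_iff_not_imp_left.2 fun hab => ?_
  have hpos : 0 < dist (r a) (r b) := dist_pos.2 fun h => hab (hr h)
  obtain ⟨N, hN⟩ := exists_nat_gt (dist (r a) (r b))⁻¹
  exact mem_iUnion.2 ⟨N, ha.1, ha.2, (inv_lt_iff_one_lt_mul₀ hpos).1 hN⟩

end Condensation

section SquareBracket

variable {α X : Type*} [ConditionallyCompleteLinearOrder α] [MetricSpace X]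

/-- A form of Todorcevic's square bracket operation `[ab]`, for `a < b`: the least `ξ ∈ [a, b]`
whose index `e b ξ` is below the level at which the points `r a` and `r b` separate. That level is
encoded as `1 / dist (r a) (r b)`, multiplied out to avoid dividing by zero. -/
noncomputable def squareBracket (e : α → α → ℕ) (r : α → X) (a b : α) : α :=
  sInf {ξ ∈ Icc a b | e b ξ * dist (r a) (r b) < 1}

-- Given `δ`, take a condensation point `b > δ` of `Z` and a shell around `r b` which is so close to
-- `r b` that `δ` qualifies, and which contains uncountably many points of `Z`. As the shell stays
-- away from `r b`, only finitely many `ξ < δ` qualify for points `a` of the shell, and `a < δ` can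
-- be chosen above all of them.
theorem exists_isClub_forall_squareBracket_eq [WellFoundedLT α] [SecondCountableTopology X]
    (hI : ∀ a : α, (Iic a).Countable) {e : α → α → ℕ} (he : ∀ b, InjOn (e b) (Iic b))
    {r : α → X} (hr : Function.Injective r) {Z : Set α} (hZ : ¬Z.Countable) :
    ∃ C : Set α, IsClub C ∧
      ∀ δ ∈ C, ∃ a ∈ Z, ∃ b ∈ Z, a < b ∧ squareBracket e r a b = δ := by
  have : Uncountable α := not_countable_iff.1 fun _ => hZ Z.to_countable
  obtain ⟨C, hC, hlim⟩ := exists_isClub_forall_isOpen_mem_limitPoints hI r Z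
  refine ⟨C, hC, fun δ hδ => ?_⟩
  obtain ⟨b, ⟨hbZ, hcond⟩, hδb⟩ : ∃ b ∈ {b ∈ Z | ∀ U ∈ 𝓝 (r b), ¬(Z ∩ r ⁻¹' U).Countable},
      δ < b := by
    by_contra! h
    refine hZ (((countable_setOf_exists_nhds_countable r Z).union (hI δ)).mono fun b hb => ?_)
    refine or_iff_not_imp_left.2 fun hnb => h b ⟨hb, fun U hU hc => hnb ⟨hb, U, hU, hc⟩⟩
  have hopen : IsOpen {x | e b δ * dist x (r b) < 1} := isOpen_lt (by fun_prop) (by fun_prop)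
  obtain ⟨N, hN⟩ := exists_nat_not_countable_inter_preimage_lt_dist hr
    (hcond _ (hopen.mem_nhds (by simp))) b
  have hδlim := hlim δ hδ _ (hopen.inter (isOpen_lt (by fun_prop) (by fun_prop))) hN
  have hfin : {ξ | ξ < δ ∧ e b ξ < N}.Finite :=
    .of_injOn (fun ξ hξ => hξ.2) ((he b).mono fun ξ hξ => (hξ.1.trans hδb).le) (finite_Iio N)
  obtain ⟨a, ⟨haZ, hnear, hfar⟩, haδ, ha⟩ :=
    exists_mem_forall_lt_of_mem_limitPoints hδlim hfin fun ξ hξ => hξ.1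
  refine ⟨a, haZ, b, hbZ, haδ.trans hδb, IsLeast.csInf_eq ⟨⟨⟨haδ.le, hδb.le⟩, hnear⟩, ?_⟩⟩
  rintro ξ ⟨⟨haξ, -⟩, hξ⟩
  by_contra! hξδ
  have hξN : e b ξ < N := by exact_mod_cast lt_of_mul_lt_mul_right (hξ.trans hfar) dist_nonneg
  exact (ha ξ ⟨hξδ, hξN⟩).not_ge haξ

end SquareBracket

theorem exists_wellOrder_forall_countable_Iic {E : Type*} (hE : #E = ℵ₁) :
    ∃ (_ : LinearOrder E) (_ : WellFoundedLT E), ∀ a : E, (Iic a).Countable := by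
  obtain ⟨_, _, h⟩ := exists_ord_eq_type_lt E
  refine ⟨_, ‹_›, fun a => ?_⟩
  rw [← Iio_insert]
  exact (le_aleph0_iff_set_countable.1 (lt_aleph_one_iff.1 (hE ▸ mk_Iio_lt a h))).insert a

theorem exists_injective_real {E : Type*} (hE : #E ≤ 𝔠) : ∃ r : E → ℝ, Function.Injective r := by
  obtain ⟨r⟩ : Nonempty (E ↪ ℝ) := lift_mk_le'.1 (by simpa [mk_real] using hE)
  exact ⟨r, r.injective⟩

theorem todorcevic_coloring_general {E κ : Type*} [Nonempty κ] (hE : #E = ℵ₁) (hκ : #κ ≤ ℵ₁) :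
    ∃ J : Sym2 E → κ, ∀ Z : Set E, ¬Z.Countable →
      ∀ c, ∃ x ∈ Z, ∃ y ∈ Z, x ≠ y ∧ J s(x, y) = c := by
  have : Uncountable E := aleph0_lt_mk_iff.1 (hE ▸ aleph0_lt_aleph_one)
  obtain ⟨_, _, hI⟩ := exists_wellOrder_forall_countable_Iic hE
  let := WellFoundedLT.toOrderBot E
  let := WellFoundedLT.conditionallyCompleteLinearOrderBot E
  obtain ⟨e, he⟩ := exists_nat_injOn_Iic hI
  obtain ⟨r, hr⟩ := exists_injective_real (hE.trans_le aleph_one_le_continuum)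
  obtain ⟨h, hh⟩ := exists_forall_isStationary_preimage_singleton hI hκ
  refine ⟨fun z => h (squareBracket e r z.inf z.sup), fun Z hZ c => ?_⟩
  obtain ⟨C, hC, hbracket⟩ := exists_isClub_forall_squareBracket_eq hI he hr hZ
  obtain ⟨δ, hδc, hδC⟩ := hh c hC
  obtain ⟨a, ha, b, hb, hab, rfl⟩ := hbracket δ hδC
  refine ⟨a, ha, b, hb, hab.ne, ?_⟩
  simpa [hab.le] using hδc

theorem todorcevic_coloring (E : Type) (hE : Cardinal.mk E = Cardinal.aleph 1) :
    ∃ J : E × E → E, ∀ Z : Set E, ¬Z.Countable →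
      J '' (Z ×ˢ Z) = Set.univ := by
  have : Nonempty E := mk_ne_zero_iff.1 (hE ▸ (aleph_pos 1).ne')
  obtain ⟨J, hJ⟩ := todorcevic_coloring_general hE hE.le
  refine ⟨fun p => J s(p.1, p.2), fun Z hZ => eq_univ_of_forall fun c => ?_⟩
  obtain ⟨x, hx, y, hy, -, hc⟩ := hJ Z hZ c
  exact ⟨(x, y), ⟨hx, hy⟩, hc⟩
end

section
/- For every countably infinite group G there exists an infinite subset Y ⊆ G such that for every natural number n there is an element g ∈ G with g ∉ Y^{[n]}. -/
/-!
A word of length at most `n` uses at most `n` letters, and a set of `c` letters yields at most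
`(2 * c + 1) ^ n` words. Hence, for a finite set `A` and a finite set `F` with sufficiently many
elements, every `n`-element set `T` has some `g ∈ F` with `g ∉ (A ∪ T)^{[n]}`. Colour `T` by such a
`g`: an infinite set `H` whose `n`-element subsets all have the same colour `g` satisfies
`g ∉ (A ∪ H)^{[n]}`. Choose the elements of `Y` one at a time: once the set `A` of the first `n` of
them is fixed, all later ones are taken from such an `H`.
-/

section Ramsey

open Finset

variable {α : Type*} {S : Set α}

theorem exists_superset_card_eq_of_infinite (hS : S.Infinite) {T : Finset α}
    (hT : ↑T ⊆ S) {n : ℕ} (hn : #T ≤ n) : ∃ T', T ⊆ T' ∧ ↑T' ⊆ S ∧ #T' = n := by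
  classical
  obtain ⟨E, hE, hEcard⟩ := (hS.sdiff T.finite_toSet).exists_subset_card_eq (n - #T)
  have hdisj : Disjoint T E := disjoint_coe.1 (Set.disjoint_sdiff_right.mono_right hE)
  refine ⟨T ∪ E, subset_union_left, ?_, ?_⟩
  · rw [coe_union]
    exact Set.union_subset hT (hE.trans Set.sdiff_subset)
  · rw [card_union_of_disjoint hdisj, hEcard, Nat.add_sub_cancel' hn]

theorem exists_injective_forall_of_forall_finset [DecidableEq α] {P : Finset α → Set α → Prop}
    (anti : ∀ A, Antitone (P A))
    (exists_refinement : ∀ (A : Finset α) (H : Set α), H.Infinite → ∃ H' ⊆ H, H'.Infinite ∧ P A H')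
    (hS : S.Infinite) :
    ∃ y : ℕ → α, y.Injective ∧ (∀ n, y n ∈ S) ∧
      ∀ n, P ((range n).image y) (y '' Set.Ici n) := by
  choose! R hRsub hRinf hRP using exists_refinement
  have exists_new (A : Finset α) (H : Set α) (hH : H.Infinite) : ∃ x ∈ H, x ∉ A :=
    hH.exists_notMem_finset A
  have : Nonempty α := hS.nonempty.to_type
  choose! x hxmem hxnew using exists_new
  -- `A` collects the elements chosen so far, `H` is the set from which all later ones are taken.
  let next (p : Finset α × Set α) := (insert (x p.1 (R p.1 p.2)) p.1, R p.1 p.2)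
  let A (n : ℕ) := (next^[n] (∅, S)).1
  let H (n : ℕ) := (next^[n] (∅, S)).2
  let y (n : ℕ) := x (A n) (H (n + 1))
  have hHsucc (n : ℕ) : H (n + 1) = R (A n) (H n) := by
    simp only [H, A, next, Function.iterate_succ_apply']
  have hAsucc (n : ℕ) : A (n + 1) = insert (y n) (A n) := by
    simp only [y, H, A, next, Function.iterate_succ_apply']
  have hHinf (n : ℕ) : (H n).Infinite := by
    induction n with
    | zero => exact hS
    | succ n ih => exact hHsucc n ▸ hRinf _ _ ih
  have hHanti : Antitone H := antitone_nat_of_succ_le fun n => hHsucc n ▸ hRsub _ _ (hHinf n)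
  have hA (n : ℕ) : A n = (range n).image y := by
    induction n with
    | zero => rfl
    | succ n ih => rw [hAsucc, ih, range_add_one, image_insert]
  have hyH (n : ℕ) : y n ∈ H (n + 1) := hxmem _ _ (hHinf _)
  have hynew (n : ℕ) : y n ∉ (range n).image y := hA n ▸ hxnew _ _ (hHinf _)
  have hinj : y.Injective := .of_lt_imp_ne fun m n hmn hy =>
    hynew n (hy ▸ mem_image_of_mem y (mem_range.2 hmn))
  have tail_subset (n : ℕ) : y '' Set.Ici n ⊆ R (A n) (H n) := by
    rintro _ ⟨k, hk, rfl⟩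
    exact hHsucc n ▸ hHanti (Nat.succ_le_succ hk) (hyH k)
  exact ⟨y, hinj, fun n => hHanti (Nat.zero_le _) (hyH n),
    fun n => hA n ▸ anti _ (tail_subset n) (hRP _ _ (hHinf n))⟩

theorem apply_image_eq_apply_min' [DecidableEq α] {κ : Type*} {f : Finset α → κ} {r : ℕ} {y : ℕ → α}
    {c : ℕ → κ} (hy : y.Injective)
    (hc : ∀ n (T : Finset α), ↑T ⊆ y '' Set.Ici (n + 1) → #T = r → f (insert (y n) T) = c n)
    {I : Finset ℕ} (hI : I.Nonempty) (hcard : #I = r + 1) : f (I.image y) = c (I.min' hI) := by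
  let i := I.min' hI
  have hi : i ∈ I := I.min'_mem hI
  have hcard_tail : #((I.erase i).image y) = r := by
    rw [card_image_of_injective _ hy, card_erase_of_mem hi, hcard, Nat.add_sub_cancel]
  have tail_subset : ↑((I.erase i).image y) ⊆ y '' Set.Ici (i + 1) := by
    rw [coe_image]
    exact Set.image_mono fun j hj => I.min'_lt_of_mem_erase_min' hI hj
  calc f (I.image y) = f (insert (y i) ((I.erase i).image y)) := by
        rw [← image_insert, insert_erase hi]
    _ = c i := hc i _ tail_subset hcard_tail

theorem infinite_ramsey {κ : Type*} [Finite κ] (r : ℕ) (f : Finset α → κ) (hS : S.Infinite) :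
    ∃ H ⊆ S, H.Infinite ∧ ∃ c, ∀ T : Finset α, ↑T ⊆ H → #T = r → f T = c := by
  classical
  induction r generalizing S κ with
  | zero => exact ⟨S, subset_rfl, hS, f ∅, fun T _ hT => by rw [card_eq_zero.1 hT]⟩
  | succ r ih =>
    let P (A : Finset α) (H : Set α) : Prop :=
      ∀ a ∈ A, ∃ c, ∀ T : Finset α, ↑T ⊆ H → #T = r → f (insert a T) = c
    have anti (A : Finset α) : Antitone (P A) := fun _ _ hle hP a ha =>
      (hP a ha).imp fun _ hc T hT => hc T (hT.trans hle)
    have exists_refinement (A : Finset α) (H : Set α) (hH : H.Infinite) :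
        ∃ H' ⊆ H, H'.Infinite ∧ P A H' := by
      -- One colouring records `f (insert a T)` for all `a ∈ A`; `Fin #A` stands in for `A` so that
      -- the universe of the colours does not change.
      obtain ⟨H', hsub, hinf, c, hc⟩ :=
        ih (fun T (i : Fin #A) => f (insert (A.equivFin.symm i : α) T)) hH
      refine ⟨H', hsub, hinf, fun a ha => ⟨c (A.equivFin ⟨a, ha⟩), fun T hT hcard => ?_⟩⟩
      simpa only [Equiv.symm_apply_apply] using congrFun (hc T hT hcard) (A.equivFin ⟨a, ha⟩)
    obtain ⟨y, hinj, hyS, hP⟩ := exists_injective_forall_of_forall_finset anti exists_refinement hS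
    choose c hc using fun n => hP (n + 1) (y n) (mem_image_of_mem y (self_mem_range_succ n))
    obtain ⟨k, hk⟩ := Finite.exists_infinite_fiber c
    refine ⟨y '' (c ⁻¹' {k}), Set.image_subset_iff.2 fun n _ => hyS n,
      (Set.infinite_coe_iff.1 hk).image hinj.injOn, k, fun T hT hcard => ?_⟩
    obtain ⟨I, hI, rfl⟩ := subset_set_image_iff.1 hT
    rw [card_image_of_injective I hinj] at hcard
    have hne : I.Nonempty := card_pos.1 (by omega)
    exact (apply_image_eq_apply_min' hinj hc hne hcard).trans (hI (I.min'_mem hne))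

end Ramsey

section WordSet

open Finset
open scoped Pointwise

variable {G : Type*} [Group G]

theorem wordSet_mono {Y Z : Set G} (h : Y ⊆ Z) (n : ℕ) : wordSet Y n ⊆ wordSet Z n :=
  fun _ ⟨m, hm, w, hw, hg⟩ => ⟨m, hm, w, fun i => (hw i).imp (@h _) (@h _), hg⟩

theorem wordSet_subset_pow (Y : Set G) (n : ℕ) : wordSet Y n ⊆ (insert 1 (Y ∪ Y⁻¹)) ^ n := by
  rintro _ ⟨m, hm, w, hw, rfl⟩
  exact Set.pow_subset_pow_right (Set.mem_insert _ _) hm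
    (Set.mem_pow.2 ⟨fun i => ⟨w i, Set.mem_insert_of_mem _ (hw i)⟩, rfl⟩)

theorem card_le_of_subset_wordSet {T F : Finset G} {n : ℕ} (h : ↑F ⊆ wordSet (T : Set G) n) :
    #F ≤ (2 * #T + 1) ^ n := by
  classical
  have hF : F ⊆ (insert 1 (T ∪ T⁻¹)) ^ n := by
    rw [← coe_subset]
    push_cast
    exact h.trans (wordSet_subset_pow _ n)
  have hletters : #(insert 1 (T ∪ T⁻¹)) ≤ 2 * #T + 1 :=
    calc #(insert 1 (T ∪ T⁻¹)) ≤ #T + #T⁻¹ + 1 :=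
          (card_insert_le _ _).trans (Nat.succ_le_succ (card_union_le _ _))
      _ = 2 * #T + 1 := by rw [card_inv, two_mul]
  exact (card_le_card hF).trans (card_pow_le.trans (Nat.pow_le_pow_left hletters n))

theorem exists_card_le_of_mem_wordSet {Y : Set G} {n : ℕ} {g : G} (hg : g ∈ wordSet Y n) :
    ∃ T : Finset G, ↑T ⊆ Y ∧ #T ≤ n ∧ g ∈ wordSet (T : Set G) n := by
  classical
  obtain ⟨m, hm, w, hw, rfl⟩ := hg
  have exists_letter (i : Fin m) : ∃ y ∈ Y, y = w i ∨ y = (w i)⁻¹ :=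
    (hw i).elim (fun h => ⟨_, h, .inl rfl⟩) fun h => ⟨_, h, .inr rfl⟩
  choose y hyY hy using exists_letter
  have mem_letters (i : Fin m) : y i ∈ (↑(univ.image y) : Set G) :=
    mem_coe.2 (mem_image_of_mem y (mem_univ i))
  refine ⟨univ.image y, by simpa [Set.range_subset_iff] using hyY,
    card_image_le.trans ((card_fin m).trans_le hm), m, hm, w, fun i => ?_, rfl⟩
  rcases hy i with h | h
  · exact .inl (h ▸ mem_letters i)
  · exact .inr (h ▸ mem_letters i)

theorem exists_infinite_subset_notMem_wordSet_union (A : Finset G) (n : ℕ) {S : Set G}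
    (hS : S.Infinite) : ∃ H ⊆ S, H.Infinite ∧ ∃ g, g ∉ wordSet (↑A ∪ H) n := by
  classical
  obtain ⟨F, -, hF⟩ := hS.exists_subset_card_eq ((2 * (#A + n) + 1) ^ n + 1)
  have exists_missed (T : Finset G) (hT : #T = n) :
      ∃ g : F, (g : G) ∉ wordSet (↑(A ∪ T) : Set G) n := by
    by_contra! hall
    have hcard : #F ≤ (2 * #(A ∪ T) + 1) ^ n := card_le_of_subset_wordSet fun g hg => hall ⟨g, hg⟩
    have hle : #(A ∪ T) ≤ #A + n := hT ▸ card_union_le A T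
    have : (2 * #(A ∪ T) + 1) ^ n ≤ (2 * (#A + n) + 1) ^ n := by gcongr
    omega
  have : Nonempty F := (card_pos.1 (by omega)).to_subtype
  choose! f hf using exists_missed
  obtain ⟨H, hHS, hH, g, hg⟩ := infinite_ramsey n f hS
  refine ⟨H, hHS, hH, g, fun hmem => ?_⟩
  obtain ⟨T, hTsub, hTcard, hgT⟩ := exists_card_le_of_mem_wordSet hmem
  have hTA : ↑(T \ A) ⊆ H := by
    rw [coe_sdiff]
    exact Set.sdiff_subset_iff.2 hTsub
  obtain ⟨T', hTT', hT'H, hT'card⟩ :=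
    exists_superset_card_eq_of_infinite hH hTA ((card_le_card sdiff_subset).trans hTcard)
  have hT : T ⊆ A ∪ T' := sdiff_le_iff.1 hTT'
  exact hf T' hT'card (hg T' hT'H hT'card ▸ wordSet_mono (coe_subset.2 hT) n hgT)

theorem countable_group_not_uniformly_generated_general {S : Set G} (hS : S.Infinite) :
    ∃ Y ⊆ S, Y.Infinite ∧ ∀ n : ℕ, ∃ g : G, g ∉ wordSet Y n := by
  classical
  let P (A : Finset G) (H : Set G) : Prop := ∃ g, g ∉ wordSet (↑A ∪ H) #A
  have anti (A : Finset G) : Antitone (P A) := fun _ _ hle ⟨g, hg⟩ =>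
    ⟨g, fun hmem => hg (wordSet_mono (Set.union_subset_union_right _ hle) _ hmem)⟩
  obtain ⟨y, hinj, hyS, hP⟩ := exists_injective_forall_of_forall_finset anti
    (fun A _ => exists_infinite_subset_notMem_wordSet_union A #A) hS
  refine ⟨Set.range y, Set.range_subset_iff.2 hyS, Set.infinite_range_of_injective hinj,
    fun n => ?_⟩
  have hrange : (↑((range n).image y) : Set G) ∪ y '' Set.Ici n = Set.range y := by
    rw [coe_image, coe_range, ← Set.image_union, Set.Iio_union_Ici, Set.image_univ]
  simpa only [P, hrange, card_image_of_injective _ hinj, card_range] using hP n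

end WordSet

theorem countable_group_not_uniformly_generated
    (G : Type) [Group G] [Countable G] [Infinite G] :
    ∃ Y : Set G, Y.Infinite ∧ ∀ n : ℕ, ∃ g : G, g ∉ wordSet Y n :=
  let ⟨Y, _, hY⟩ := countable_group_not_uniformly_generated_general (Set.infinite_univ (α := G))
  ⟨Y, hY⟩
end
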